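/- There exist two line arrangements L and P in ℙ²(ℂ), each consisting of exactly 6 lines and each having exactly 15 singular points all of which are double points (so L and P have the same weak combinatorics, indeed isomorphic intersection lattices), such that extSS(L) ≠ extSS(P). In particular, the number extSS(·) is not determined by the intersection lattice of the arrangement. -/

import Mathlib

/-!
Both arrangements consist of tangent lines `ell t = [1 : t : t²]` of a fixed conic, for `t` in a
six-element set `T ⊆ ℂ`.  A point lies on `ell t` iff `t` is a root of a nonzero polynomial of
degree at most two, so every such arrangement has only double points, one for each pair in `T`;
the double point of `ell s` and `ell t` is `pt s t = [st : -(s+t) : 1]`.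

Let `B` be a supersolvable arrangement containing the six lines, with modular point `p`.  Each
double point of two of the six lines that avoid `p` must be joined to `p` by a line of `B` that is
not among the six, and double points sharing a tangent line need different joining lines.  Hence
the new lines properly colour the edges of the complete graph on the lines avoiding `p`.
If at least five lines avoid `p`, at least five colours are needed (`K₅` has ten edges, and a
colour class has at most two).  Otherwise `p = pt a b`, exactly four lines avoid `p`, and two edges
of equal colour make `pt a b`, `pt c d`, `pt e f` collinear for a partition of `T` into pairs.

For `T = {0, 1, 2, 3, 4, 6}` no partition into pairs gives collinear points, so `extSS ≥ 5`
(`five_le_of_noncollinear`).  For `T = {±1, ±2, ±4}` the involutions `t ↦ -t` and `t ↦ -4/t` both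
exchange `2` and `-2`, so two of the three diagonals of the other four lines pass through
`pt 2 (-2)`, and four additional lines through that point suffice.
-/

open scoped Classical

noncomputable section

/-- The projective plane `ℙ²(ℂ)`, used both for points and for lines
(a line being recorded by its coefficient vector, up to scalar). -/
abbrev P2 := Projectivization ℂ (Fin 3 → ℂ)

lemma vne₀ {a b c : ℂ} (h : a ≠ 0) : ![a, b, c] ≠ 0 :=
  fun hh => h (by simpa using congrFun hh 0)

lemma vne₁ {a b c : ℂ} (h : b ≠ 0) : ![a, b, c] ≠ 0 :=
  fun hh => h (by simpa using congrFun hh 1)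

lemma vne₂ {a b c : ℂ} (h : c ≠ 0) : ![a, b, c] ≠ 0 :=
  fun hh => h (by simpa using congrFun hh 2)

/-- The point (or line) of `ℙ²(ℂ)` with homogeneous coordinates `[a : b : c]`. -/
def mkP (a b c : ℂ) (h : ![a, b, c] ≠ 0) : P2 := Projectivization.mk ℂ ![a, b, c] h

/-- Incidence: the point `p` lies on the line `L`
(the line being given by its coefficient vector, up to scalar). -/
def Incid (p L : P2) : Prop := ∑ i : Fin 3, p.rep i * L.rep i = 0

/-- The multiplicity of a point `p` with respect to the line arrangement `A`:
the number of lines of `A` passing through `p`. -/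
def mult (A : Finset P2) (p : P2) : ℕ := (A.filter fun L => Incid p L).card

/-- `p` is a singular point of the arrangement `A`: it lies on at least two of its lines. -/
def IsSing (A : Finset P2) (p : P2) : Prop := 2 ≤ mult A p

/-- The set of singular points of `A`. -/
def Sing (A : Finset P2) : Set P2 := {p | IsSing A p}

/-- `tr A r` is the number of singular points of `A` of multiplicity exactly `r`. -/
def tr (A : Finset P2) (r : ℕ) : ℕ := {p : P2 | mult A p = r}.ncard

/-- `P` is a modular point of `A`: it is a singular point, and for every singular point
`Q ≠ P` the line through `P` and `Q` belongs to `A`. -/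
def IsModular (A : Finset P2) (P : P2) : Prop :=
  IsSing A P ∧ ∀ Q : P2, IsSing A Q → Q ≠ P → ∃ L ∈ A, Incid P L ∧ Incid Q L

/-- A line arrangement in `ℙ²(ℂ)` is supersolvable iff it has a modular point. -/
def Supersolvable (A : Finset P2) : Prop := ∃ P : P2, IsModular A P

/-- The extension-to-supersolvability number: the least `k` such that `A` is contained in a
supersolvable arrangement with `|A| + k` lines. -/
def extSS (A : Finset P2) : ℕ :=
  sInf {k : ℕ | ∃ B : Finset P2, A ⊆ B ∧ Supersolvable B ∧ B.card = A.card + k}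

/-! ### Incidence in coordinates -/

lemma incid_mkP (p : P2) (a b c : ℂ) (h : ![a, b, c] ≠ 0) :
    Incid p (mkP a b c h) ↔ p.rep 0 * a + p.rep 1 * b + p.rep 2 * c = 0 := by
  obtain ⟨u, hu⟩ := Projectivization.exists_smul_eq_mk_rep ℂ ![a, b, c] h
  have hu0 : (u : ℂ) ≠ 0 := u.ne_zero
  unfold Incid mkP
  rw [← hu]
  simp only [Fin.sum_univ_three, Pi.smul_apply, Units.smul_def, smul_eq_mul]
  simp only [Matrix.cons_val]
  rw [← mul_right_inj' hu0 (b := p.rep 0 * a + p.rep 1 * b + p.rep 2 * c), mul_zero]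
  ring_nf

lemma mkP_incid (L : P2) (a b c : ℂ) (h : ![a, b, c] ≠ 0) :
    Incid (mkP a b c h) L ↔ a * L.rep 0 + b * L.rep 1 + c * L.rep 2 = 0 := by
  have hc : Incid (mkP a b c h) L ↔ Incid L (mkP a b c h) := by
    simp only [Incid, mul_comm]
  rw [hc, incid_mkP]
  ring_nf

lemma mkP_incid_mkP (x y z a b c : ℂ) (h : ![x, y, z] ≠ 0) (h' : ![a, b, c] ≠ 0) :
    Incid (mkP x y z h) (mkP a b c h') ↔ x * a + y * b + z * c = 0 := by
  obtain ⟨u, hu⟩ := Projectivization.exists_smul_eq_mk_rep ℂ ![x, y, z] h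
  have hu0 : (u : ℂ) ≠ 0 := u.ne_zero
  rw [incid_mkP]
  unfold mkP
  rw [← hu]
  simp only [Pi.smul_apply, Units.smul_def, smul_eq_mul]
  simp only [Matrix.cons_val]
  rw [← mul_right_inj' hu0 (b := x * a + y * b + z * c), mul_zero]
  ring_nf

lemma eq_mkP_of_rep (p : P2) (k a b c : ℂ) (h : ![a, b, c] ≠ 0)
    (h0 : p.rep 0 = k * a) (h1 : p.rep 1 = k * b) (h2 : p.rep 2 = k * c) :
    p = mkP a b c h := by
  rw [← p.mk_rep]
  unfold mkP
  rw [Projectivization.mk_eq_mk_iff']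
  refine ⟨k, ?_⟩
  ext i
  fin_cases i <;> simp [h0, h1, h2]

lemma rep_cases (p : P2) (h0 : p.rep 0 = 0) (h1 : p.rep 1 = 0) (h2 : p.rep 2 = 0) : False := by
  apply p.rep_nonzero
  ext i
  fin_cases i <;> simp [h0, h1, h2]

/-! ### Tangent lines of a conic -/

/-- The line `[1 : t : t²]`; these lines are tangent to the conic `y² = 4xz`. -/
def ell (t : ℂ) : P2 := mkP 1 t (t ^ 2) (vne₀ one_ne_zero)

/-- The point `[st : -(s+t) : 1]`, which is the intersection of `ell s` and `ell t` if `s ≠ t`. -/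
def pt (s t : ℂ) : P2 := mkP (s * t) (-(s + t)) 1 (vne₂ one_ne_zero)

/-- The arrangement of the lines `ell t` for `t ∈ T`. -/
def arr (T : Finset ℂ) : Finset P2 := T.image ell

lemma pt_comm (s t : ℂ) : pt s t = pt t s := by
  unfold pt
  congr 1 <;> ring

lemma pt_incid_ell (s t u : ℂ) : Incid (pt s t) (ell u) ↔ u = s ∨ u = t := by
  unfold pt ell
  rw [mkP_incid_mkP, ← sub_eq_zero (a := u), ← sub_eq_zero (a := u) (b := t), ← mul_eq_zero]
  ring_nf

lemma ell_injective : Function.Injective ell := by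
  intro s t h
  have h1 : Incid (pt t t) (ell s) := by rw [h, pt_incid_ell]; simp
  simpa [pt_incid_ell] using h1

lemma eq_pt {p : P2} {s t : ℂ} (hst : s ≠ t) (hs : Incid p (ell s)) (ht : Incid p (ell t)) :
    p = pt s t := by
  unfold ell at hs ht
  rw [incid_mkP] at hs ht
  have hne : s - t ≠ 0 := sub_ne_zero.mpr hst
  have h1 : p.rep 1 = p.rep 2 * (-(s + t)) := by
    apply mul_left_cancel₀ hne
    linear_combination hs - ht
  refine eq_mkP_of_rep p (p.rep 2) _ _ _ _ ?_ h1 (by ring)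
  linear_combination hs - s * h1

lemma eq_ell {M : P2} {u v w : ℂ} (hvw : v ≠ w) (hv : Incid (pt u v) M) (hw : Incid (pt u w) M) :
    M = ell u := by
  unfold pt at hv hw
  rw [mkP_incid] at hv hw
  have hne : v - w ≠ 0 := sub_ne_zero.mpr hvw
  have h1 : M.rep 1 = M.rep 0 * u := by
    apply mul_left_cancel₀ hne
    linear_combination hw - hv
  refine eq_mkP_of_rep M (M.rep 0) _ _ _ _ (by ring) h1 ?_
  linear_combination hv + (u + v) * h1

/-- Up to sign, the determinant of the coordinate vectors of `pt a b`, `pt c d`, `pt e f`. -/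
def det3 {R : Type*} [CommRing R] (a b c d e f : R) : R :=
  (a * b - c * d) * (a + b - e - f) - (a * b - e * f) * (a + b - c - d)

lemma det3_eq_zero {M : P2} {a b c d e f : ℂ} (h1 : Incid (pt a b) M) (h2 : Incid (pt c d) M)
    (h3 : Incid (pt e f) M) : det3 a b c d e f = 0 := by
  by_contra hD
  unfold pt at h1 h2 h3
  rw [mkP_incid] at h1 h2 h3
  have hx : M.rep 0 = 0 := by
    apply (mul_eq_zero.mp _).resolve_left hD
    unfold det3
    linear_combination (a + b - e - f) * (h1 - h2) - (a + b - c - d) * (h1 - h3)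
  have hy : M.rep 1 = 0 := by
    apply (mul_eq_zero.mp _).resolve_left hD
    unfold det3
    linear_combination (a * b - e * f) * (h1 - h2) - (a * b - c * d) * (h1 - h3)
  refine rep_cases M hx hy ?_
  linear_combination h1 - a * b * hx + (a + b) * hy

lemma card_arr (T : Finset ℂ) : (arr T).card = T.card :=
  Finset.card_image_of_injective _ ell_injective

lemma mult_arr (T : Finset ℂ) (p : P2) :
    mult (arr T) p = (T.filter fun t => Incid p (ell t)).card := by
  unfold mult arr
  rw [Finset.filter_image, Finset.card_image_of_injective _ ell_injective]

lemma mult_arr_le (T : Finset ℂ) (p : P2) : mult (arr T) p ≤ 2 := by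
  rw [mult_arr]
  by_contra! h
  obtain ⟨a, ha, b, hb, c, hc, hab, hac, hbc⟩ := Finset.two_lt_card.mp h
  rw [Finset.mem_filter] at ha hb hc
  have hp := eq_pt hab ha.2 hb.2
  have h3 := hc.2
  rw [hp, pt_incid_ell] at h3
  rcases h3 with h3 | h3
  · exact hac h3.symm
  · exact hbc h3.symm

lemma mult_arr_eq {T : Finset ℂ} {p : P2} (h : IsSing (arr T) p) : mult (arr T) p = 2 :=
  le_antisymm (mult_arr_le T p) h

lemma ncard_sing_arr (T : Finset ℂ) : (Sing (arr T)).ncard = T.card.choose 2 := by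
  rw [← Finset.card_powersetCard, ← Set.ncard_coe_finset]
  refine Set.ncard_congr (fun p _ => T.filter fun t => Incid p (ell t)) ?_ ?_ ?_
  · intro p hp
    rw [Finset.mem_coe, Finset.mem_powersetCard]
    exact ⟨Finset.filter_subset _ _, by rw [← mult_arr]; exact mult_arr_eq hp⟩
  · intro p q hp _ hpq
    have h2 : 1 < (T.filter fun t => Incid p (ell t)).card := by
      rw [← mult_arr]; exact hp
    obtain ⟨a, ha, b, hb, hab⟩ := Finset.one_lt_card.mp h2
    have ha' := ha
    have hb' := hb
    rw [hpq] at ha' hb'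
    rw [Finset.mem_filter] at ha hb ha' hb'
    rw [eq_pt hab ha.2 hb.2, eq_pt hab ha'.2 hb'.2]
  · intro e he
    rw [Finset.mem_coe, Finset.mem_powersetCard] at he
    obtain ⟨heT, hec⟩ := he
    obtain ⟨a, b, hab, rfl⟩ := Finset.card_eq_two.mp hec
    have hf : (T.filter fun t => Incid (pt a b) (ell t)) = {a, b} := by
      ext t
      simp only [Finset.mem_filter, pt_incid_ell, Finset.mem_insert, Finset.mem_singleton]
      refine ⟨fun h => h.2, fun h => ⟨heT (by simpa using h), h⟩⟩
    refine ⟨pt a b, ?_, hf⟩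
    change 2 ≤ mult (arr T) (pt a b)
    rw [mult_arr, hf, hec]

/-! ### Supersolvable extensions -/

/-- Adding to `arr T` a set `S` of lines through `p` makes `p` modular as soon as every double
point of `arr T` is joined to `p`: all other singular points lie on a line of `S`. -/
lemma supersolvable_union {T : Finset ℂ} {S : Finset P2} {p : P2} (hS : ∀ M ∈ S, Incid p M)
    (hj : ∀ s ∈ T, ∀ t ∈ T, s ≠ t → ∃ M ∈ arr T ∪ S, Incid p M ∧ Incid (pt s t) M)
    (h2 : ∃ M ∈ arr T ∪ S, ∃ M' ∈ arr T ∪ S, Incid p M ∧ Incid p M' ∧ M ≠ M') :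
    Supersolvable (arr T ∪ S) := by
  refine ⟨p, ?_, ?_⟩
  · obtain ⟨M, hM, M', hM', hp, hp', hne⟩ := h2
    exact Finset.one_lt_card.mpr
      ⟨M, Finset.mem_filter.mpr ⟨hM, hp⟩, M', Finset.mem_filter.mpr ⟨hM', hp'⟩, hne⟩
  · intro Q hQ _
    obtain ⟨M, hM, M', hM', hne⟩ := Finset.one_lt_card.mp hQ
    rw [Finset.mem_filter] at hM hM'
    rcases Finset.mem_union.mp hM.1 with hMA | hMS
    · rcases Finset.mem_union.mp hM'.1 with hMA' | hMS'
      · obtain ⟨s, hs, rfl⟩ := Finset.mem_image.mp hMA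
        obtain ⟨t, ht, rfl⟩ := Finset.mem_image.mp hMA'
        have hst : s ≠ t := fun h => hne (by rw [h])
        obtain ⟨K, hK, hpK, hQK⟩ := hj s hs t ht hst
        refine ⟨K, hK, hpK, ?_⟩
        rw [eq_pt hst hM.2 hM'.2]
        exact hQK
      · exact ⟨M', hM'.1, hS _ hMS', hM'.2⟩
    · exact ⟨M, hM.1, hS _ hMS, hM.2⟩

lemma extSS_le {A S : Finset P2} (h : Supersolvable (A ∪ S)) : extSS A ≤ S.card := by
  have h1 : A.card ≤ (A ∪ S).card := Finset.card_le_card Finset.subset_union_left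
  have h2 := Finset.card_union_le A S
  have h3 : extSS A ≤ (A ∪ S).card - A.card :=
    Nat.sInf_le ⟨A ∪ S, Finset.subset_union_left, h, by omega⟩
  omega

/-- `arr T` has some supersolvable extension: the point `[1 : 0 : 0]` becomes modular after adding
the lines `[0 : 1 : s + t]`. -/
lemma exists_extension (T : Finset ℂ) (h0 : (0 : ℂ) ∈ T) (h1 : (1 : ℂ) ∈ T) :
    {k : ℕ | ∃ B : Finset P2, arr T ⊆ B ∧ Supersolvable B ∧
      B.card = (arr T).card + k}.Nonempty := by
  let g : ℂ × ℂ → P2 := fun q => mkP 0 1 (q.1 + q.2) (vne₁ one_ne_zero)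
  let S : Finset P2 := (T ×ˢ T).image g
  let p : P2 := mkP 1 0 0 (vne₀ one_ne_zero)
  have hg : ∀ q, Incid p (g q) := fun q => by
    simp only [p, g, mkP_incid_mkP]; ring
  have hmem : ∀ s ∈ T, ∀ t ∈ T, g (s, t) ∈ arr T ∪ S := fun s hs t ht =>
    Finset.mem_union_right _ (Finset.mem_image_of_mem g (Finset.mk_mem_product hs ht))
  have hss : Supersolvable (arr T ∪ S) := by
    refine supersolvable_union (p := p) ?_ ?_ ?_
    · intro M hM
      obtain ⟨q, -, rfl⟩ := Finset.mem_image.mp hM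
      exact hg q
    · intro s hs t ht _
      refine ⟨g (s, t), hmem s hs t ht, hg _, ?_⟩
      simp only [pt, g, mkP_incid_mkP]
      ring
    · refine ⟨g (0, 0), hmem 0 h0 0 h0, g (0, 1), hmem 0 h0 1 h1, hg _, hg _, ?_⟩
      intro h
      -- `[0 : 0 : 1]` is on the line `[0 : 1 : 0]` but not on `[0 : 1 : 1]`
      have hi : Incid (mkP 0 0 1 (vne₂ one_ne_zero)) (g (0, 0)) := by
        simp [g, mkP_incid_mkP]
      rw [h] at hi
      simp [g, mkP_incid_mkP] at hi
  refine ⟨(arr T ∪ S).card - (arr T).card, arr T ∪ S, Finset.subset_union_left, hss, ?_⟩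
  have : (arr T).card ≤ (arr T ∪ S).card := Finset.card_le_card Finset.subset_union_left
  omega

/-! ### The lower bound -/

/-- The colouring of pairs of lines avoiding the modular point: the line joining `p` to a double
point of two such lines is not in `arr T`, because a double point is on no third line of `arr T`. -/
lemma exists_colour {T : Finset ℂ} {B : Finset P2} {p : P2} (hTB : arr T ⊆ B)
    (hp : IsModular B p) {s t : ℂ} (hs : s ∈ T) (ht : t ∈ T) (hst : s ≠ t)
    (hps : ¬ Incid p (ell s)) (hpt : ¬ Incid p (ell t)) :
    ∃ M ∈ B \ arr T, Incid p M ∧ Incid (pt s t) M := by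
  have hes : Incid (pt s t) (ell s) := by simp [pt_incid_ell]
  have het : Incid (pt s t) (ell t) := by simp [pt_incid_ell]
  have hsing : IsSing B (pt s t) := Finset.one_lt_card.mpr
    ⟨ell s, Finset.mem_filter.mpr ⟨hTB (Finset.mem_image_of_mem _ hs), hes⟩,
     ell t, Finset.mem_filter.mpr ⟨hTB (Finset.mem_image_of_mem _ ht), het⟩,
     fun h => hst (ell_injective h)⟩
  have hne : pt s t ≠ p := fun h => hps (h ▸ hes)
  obtain ⟨M, hMB, hpM, hQM⟩ := hp.2 _ hsing hne
  refine ⟨M, Finset.mem_sdiff.mpr ⟨hMB, fun hMA => ?_⟩, hpM, hQM⟩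
  obtain ⟨u, -, rfl⟩ := Finset.mem_image.mp hMA
  rcases (pt_incid_ell s t u).mp hQM with rfl | rfl
  · exact hps hpM
  · exact hpt hpM

/-- The hypothesis `hD` says that for no partition of `T` into three pairs the corresponding double
points are collinear.  The proof shows that fewer than five new lines cannot properly colour the
pairs of lines avoiding the modular point. -/
lemma five_le_card_sdiff {T : Finset ℂ} (hT : T.card = 6)
    (hD : ∀ a ∈ T, ∀ b ∈ T, a ≠ b → ∀ c ∈ T, c ≠ a → c ≠ b → ∀ d ∈ T, d ≠ a → d ≠ b → d ≠ c →
      ∀ e ∈ T, e ≠ a → e ≠ b → e ≠ c → e ≠ d →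
      ∀ f ∈ T, f ≠ a → f ≠ b → f ≠ c → f ≠ d → f ≠ e → det3 a b c d e f ≠ 0)
    {B : Finset P2} (hTB : arr T ⊆ B) (hss : Supersolvable B) :
    5 ≤ (B \ arr T).card := by
  by_contra! hlt
  obtain ⟨p, hp⟩ := hss
  set I : Finset ℂ := T.filter fun t => ¬ Incid p (ell t) with hI
  have hsum : (T.filter fun t => Incid p (ell t)).card + I.card = 6 := by
    rw [← hT, hI, Finset.card_filter_add_card_filter_not]
  have hcol : ∀ e : Finset ℂ, ∃ M : P2, e ∈ I.powersetCard 2 → M ∈ B \ arr T ∧ Incid p M ∧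
      ∀ s t, s ≠ t → e = {s, t} → Incid (pt s t) M := by
    intro e
    by_cases he : e ∈ I.powersetCard 2
    · rw [Finset.mem_powersetCard] at he
      obtain ⟨heI, hec⟩ := he
      obtain ⟨a, b, hab, rfl⟩ := Finset.card_eq_two.mp hec
      have ha : a ∈ I := heI (by simp)
      have hb : b ∈ I := heI (by simp)
      rw [hI, Finset.mem_filter] at ha hb
      obtain ⟨M, hM, hpM, hQM⟩ := exists_colour hTB hp ha.1 hb.1 hab ha.2 hb.2
      refine ⟨M, fun _ => ⟨hM, hpM, fun s t hst h => ?_⟩⟩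
      have hs : s = a ∨ s = b := by
        have : s ∈ ({a, b} : Finset ℂ) := by rw [h]; simp
        simpa using this
      have ht : t = a ∨ t = b := by
        have : t ∈ ({a, b} : Finset ℂ) := by rw [h]; simp
        simpa using this
      rcases hs with rfl | rfl <;> rcases ht with rfl | rfl
      · exact absurd rfl hst
      · exact hQM
      · rw [pt_comm]; exact hQM
      · exact absurd rfl hst
    · exact ⟨p, fun h => absurd h he⟩
  choose F hF using hcol
  -- the colouring is proper: edges of equal colour are disjoint
  have hdisj : ∀ e₁ ∈ I.powersetCard 2, ∀ e₂ ∈ I.powersetCard 2, e₁ ≠ e₂ → F e₁ = F e₂ →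
      Disjoint e₁ e₂ := by
    intro e₁ he₁ e₂ he₂ hne hFe
    by_contra hnd
    obtain ⟨u, hu₁, hu₂⟩ := Finset.not_disjoint_iff.mp hnd
    have key : ∀ e ∈ I.powersetCard 2, u ∈ e → ∃ v, u ≠ v ∧ e = {u, v} := by
      intro e he hu
      obtain ⟨a, b, hab, rfl⟩ := Finset.card_eq_two.mp (Finset.mem_powersetCard.mp he).2
      rcases Finset.mem_insert.mp hu with rfl | hu
      · exact ⟨b, hab, rfl⟩
      · rw [Finset.mem_singleton] at hu
        subst hu
        exact ⟨a, hab.symm, Finset.pair_comm _ _⟩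
    obtain ⟨v, huv, h₁⟩ := key e₁ he₁ hu₁
    obtain ⟨w, huw, h₂⟩ := key e₂ he₂ hu₂
    have hvw : v ≠ w := fun h => hne (by rw [h₁, h₂, h])
    have hi₁ := (hF e₁ he₁).2.2 u v huv h₁
    have hi₂ := (hF e₂ he₂).2.2 u w huw h₂
    rw [← hFe] at hi₂
    have hM := eq_ell hvw hi₁ hi₂
    have huI : u ∈ I := (Finset.mem_powersetCard.mp he₁).1 hu₁
    apply (Finset.mem_sdiff.mp (hF e₁ he₁).1).2
    rw [hM]
    exact Finset.mem_image_of_mem _ (Finset.mem_filter.mp huI).1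
  by_cases h5 : 5 ≤ I.card
  · obtain ⟨J, hJI, hJ⟩ := Finset.exists_subset_card_eq h5
    have hsub : J.powersetCard 2 ⊆ I.powersetCard 2 := Finset.powersetCard_mono hJI
    have hten : (J.powersetCard 2).card = 10 := by
      rw [Finset.card_powersetCard, hJ]; rfl
    obtain ⟨M, -, hM⟩ := Finset.exists_lt_card_fiber_of_mul_lt_card_of_maps_to
      (s := J.powersetCard 2) (t := B \ arr T) (f := F) (n := 2)
      (fun e he => (hF e (hsub he)).1) (by omega)
    obtain ⟨x, hx, y, hy, z, hz, hxy, hxz, hyz⟩ := Finset.two_lt_card.mp hM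
    rw [Finset.mem_filter] at hx hy hz
    have d1 := hdisj x (hsub hx.1) y (hsub hy.1) hxy (hx.2.trans hy.2.symm)
    have d2 := hdisj x (hsub hx.1) z (hsub hz.1) hxz (hx.2.trans hz.2.symm)
    have d3 := hdisj y (hsub hy.1) z (hsub hz.1) hyz (hy.2.trans hz.2.symm)
    obtain ⟨hxJ, hxc⟩ := Finset.mem_powersetCard.mp hx.1
    obtain ⟨hyJ, hyc⟩ := Finset.mem_powersetCard.mp hy.1
    obtain ⟨hzJ, hzc⟩ := Finset.mem_powersetCard.mp hz.1
    have hle := Finset.card_le_card (Finset.union_subset (Finset.union_subset hxJ hyJ) hzJ)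
    rw [Finset.card_union_of_disjoint (Finset.disjoint_union_left.mpr ⟨d2, d3⟩),
      Finset.card_union_of_disjoint d1] at hle
    omega
  · have h2 : 1 < (T.filter fun t => Incid p (ell t)).card := by omega
    have hle := mult_arr_le T p
    rw [mult_arr] at hle
    obtain ⟨a, ha, b, hb, hab⟩ := Finset.one_lt_card.mp h2
    rw [Finset.mem_filter] at ha hb
    have hpab := eq_pt hab ha.2 hb.2
    have hsix : (B \ arr T).card < (I.powersetCard 2).card := by
      have h4 : I.card = 4 := by omega
      rw [Finset.card_powersetCard, h4]
      change _ < 6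
      omega
    obtain ⟨x, hx, y, hy, hxy, hFxy⟩ := Finset.exists_ne_map_eq_of_card_lt_of_maps_to hsix
      (f := F) (fun e he => (hF e he).1)
    have hd := hdisj x hx y hy hxy hFxy
    obtain ⟨hxI, hxc⟩ := Finset.mem_powersetCard.mp hx
    obtain ⟨hyI, hyc⟩ := Finset.mem_powersetCard.mp hy
    obtain ⟨c, d, hcd, rfl⟩ := Finset.card_eq_two.mp hxc
    obtain ⟨e, f, hef, rfl⟩ := Finset.card_eq_two.mp hyc
    obtain ⟨hnx, hpx, hx'⟩ := hF _ hx
    obtain ⟨-, -, hy'⟩ := hF _ hy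
    have i1 := hx' c d hcd rfl
    have i2 := hy' e f hef rfl
    rw [← hFxy] at i2
    rw [hpab] at hpx
    have hc : c ∈ I := hxI (by simp)
    have hd' : d ∈ I := hxI (by simp)
    have he : e ∈ I := hyI (by simp)
    have hf : f ∈ I := hyI (by simp)
    have off : ∀ u ∈ I, u ∈ T ∧ u ≠ a ∧ u ≠ b := by
      intro u hu
      rw [hI, Finset.mem_filter] at hu
      exact ⟨hu.1, fun h => hu.2 (h ▸ ha.2), fun h => hu.2 (h ▸ hb.2)⟩
    simp only [Finset.disjoint_insert_left, Finset.disjoint_singleton_left, Finset.mem_insert,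
      Finset.mem_singleton, not_or] at hd
    obtain ⟨⟨hce, hcf⟩, hde, hdf⟩ := hd
    obtain ⟨c1, c2, c3⟩ := off c hc
    obtain ⟨d1, d2, d3⟩ := off d hd'
    obtain ⟨e1, e2, e3⟩ := off e he
    obtain ⟨f1, f2, f3⟩ := off f hf
    exact hD a ha.1 b hb.1 hab c c1 c2 c3 d d1 d2 d3 hcd.symm e e1 e2 e3 (Ne.symm hce)
      (Ne.symm hde) f f1 f2 f3 (Ne.symm hcf) (Ne.symm hdf) hef.symm (det3_eq_zero hpx i1 i2)

/-- If no partition of `T` into three pairs gives collinear double points, at least five lines have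
to be added.  The parameters `0, 1 ∈ T` only serve to exhibit some supersolvable extension, without
which `extSS` would take the junk value `0`. -/
lemma five_le_of_noncollinear {T : Finset ℂ} (hT : T.card = 6) (h0 : (0 : ℂ) ∈ T)
    (h1 : (1 : ℂ) ∈ T)
    (hD : ∀ a ∈ T, ∀ b ∈ T, a ≠ b → ∀ c ∈ T, c ≠ a → c ≠ b → ∀ d ∈ T, d ≠ a → d ≠ b → d ≠ c →
      ∀ e ∈ T, e ≠ a → e ≠ b → e ≠ c → e ≠ d →
      ∀ f ∈ T, f ≠ a → f ≠ b → f ≠ c → f ≠ d → f ≠ e → det3 a b c d e f ≠ 0) :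
    5 ≤ extSS (arr T) := by
  obtain ⟨B, hTB, hss, hcard⟩ := Nat.sInf_mem (exists_extension T h0 h1)
  have h5 := five_le_card_sdiff hT hD hTB hss
  rw [Finset.card_sdiff_of_subset hTB, hcard] at h5
  unfold extSS
  omega

/-! ### The two arrangements -/

/-- The parameters `0, 1, 2, 3, 4, 6`, as integers so that the kernel can compute with them. -/
def genericInt : Finset ℤ := {0, 1, 2, 3, 4, 6}

/-- The parameters of the arrangement without collinear triples of double points. -/
def genericT : Finset ℂ := genericInt.image (fun n : ℤ => (n : ℂ))

/-- The parameters of the arrangement admitting a supersolvable extension by four lines. -/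
def specialT : Finset ℂ := {1, -1, 2, -2, 4, -4}

lemma det3_genericInt : ∀ a ∈ genericInt, ∀ b ∈ genericInt, a ≠ b →
    ∀ c ∈ genericInt, c ≠ a → c ≠ b → ∀ d ∈ genericInt, d ≠ a → d ≠ b → d ≠ c →
    ∀ e ∈ genericInt, e ≠ a → e ≠ b → e ≠ c → e ≠ d →
    ∀ f ∈ genericInt, f ≠ a → f ≠ b → f ≠ c → f ≠ d → f ≠ e → det3 a b c d e f ≠ 0 := by
  unfold det3 genericInt
  decide +kernel

lemma card_genericT : genericT.card = 6 := by
  unfold genericT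
  rw [Finset.card_image_of_injective _ Int.cast_injective]
  rfl

lemma card_specialT : specialT.card = 6 := by
  unfold specialT
  repeat rw [Finset.card_insert_of_notMem (by norm_num [Complex.ext_iff])]
  simp

lemma five_le_extSS_genericT : 5 ≤ extSS (arr genericT) := by
  refine five_le_of_noncollinear card_genericT ?_ ?_ ?_
  · exact Finset.mem_image.mpr ⟨0, by decide, by simp⟩
  · exact Finset.mem_image.mpr ⟨1, by decide, by simp⟩
  · simp only [genericT, Finset.forall_mem_image, ne_eq, Int.cast_inj]
    intro a ha b hb hab c hc c1 c2 d hd d1 d2 d3 e he e1 e2 e3 e4 f hf f1 f2 f3 f4 f5 h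
    apply det3_genericInt a ha b hb hab c hc c1 c2 d hd d1 d2 d3 e he e1 e2 e3 e4 f hf
      f1 f2 f3 f4 f5
    unfold det3 at h ⊢
    exact_mod_cast h

/-- The lines through `pt 2 (-2) = [-4 : 0 : 1]` and the double points of the tangent lines with
parameters `±1, ±4`: the first two are diagonals, containing two double points each. -/
def specialS : Finset P2 :=
  {mkP 0 1 0 (vne₁ one_ne_zero), mkP 1 0 4 (vne₀ one_ne_zero),
   mkP 5 8 20 (vne₀ (by norm_num)), mkP 5 (-8) 20 (vne₀ (by norm_num))}

lemma extSS_specialT_le : extSS (arr specialT) ≤ 4 := by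
  refine (extSS_le (S := specialS) ?_).trans Finset.card_le_four
  have m2 : ell 2 ∈ arr specialT ∪ specialS :=
    Finset.mem_union_left _ (Finset.mem_image_of_mem _ (by simp [specialT]))
  have m2' : ell (-2) ∈ arr specialT ∪ specialS :=
    Finset.mem_union_left _ (Finset.mem_image_of_mem _ (by simp [specialT]))
  have i2 : Incid (pt 2 (-2)) (ell 2) := by simp [pt_incid_ell]
  have i2' : Incid (pt 2 (-2)) (ell (-2)) := by simp [pt_incid_ell]
  refine supersolvable_union (p := pt 2 (-2)) ?_ ?_ ?_
  · intro M hM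
    simp only [specialS, Finset.mem_insert, Finset.mem_singleton] at hM
    rcases hM with rfl | rfl | rfl | rfl <;> unfold pt <;> rw [mkP_incid_mkP] <;> norm_num
  · -- a pair containing `±2` is joined by a line of the arrangement itself
    have key : ∀ s t : ℂ, (s = 2 ∨ s = -2 ∨ t = 2 ∨ t = -2) →
        ∃ M ∈ arr specialT ∪ specialS, Incid (pt 2 (-2)) M ∧ Incid (pt s t) M := by
      intro s t h
      rcases h with rfl | rfl | rfl | rfl
      · exact ⟨_, m2, i2, by simp [pt_incid_ell]⟩
      · exact ⟨_, m2', i2', by simp [pt_incid_ell]⟩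
      · exact ⟨_, m2, i2, by simp [pt_incid_ell]⟩
      · exact ⟨_, m2', i2', by simp [pt_incid_ell]⟩
    have key' : ∀ s t : ℂ, (∃ M ∈ specialS, Incid (pt 2 (-2)) M ∧ Incid (pt s t) M) →
        ∃ M ∈ arr specialT ∪ specialS, Incid (pt 2 (-2)) M ∧ Incid (pt s t) M :=
      fun s t ⟨M, hM, h⟩ => ⟨M, Finset.mem_union_right _ hM, h⟩
    intro s hs t ht hst
    simp only [specialT, Finset.mem_insert, Finset.mem_singleton] at hs ht
    rcases hs with rfl | rfl | rfl | rfl | rfl | rfl <;>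
    rcases ht with rfl | rfl | rfl | rfl | rfl | rfl <;>
    first
    | exact absurd rfl hst
    | (apply key; simp; done)
    | (apply key'
       simp only [specialS, Finset.mem_insert, Finset.mem_singleton, exists_eq_or_imp,
         exists_eq_left, pt, mkP_incid_mkP]
       norm_num)
  · refine ⟨_, m2, _, m2', i2, i2', fun h => ?_⟩
    have := ell_injective h
    norm_num [Complex.ext_iff] at this

/-- There exist two arrangements of `6` lines in `ℙ²(ℂ)`, each with exactly
`15` singular points all of which are double points (the same weak combinatorics, indeed
isomorphic intersection lattices), whose `extSS` numbers differ.  In particular `extSS` is not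
determined by the intersection lattice. -/
theorem stmt_3 :
    ∃ L P : Finset P2, L.card = 6 ∧ P.card = 6 ∧
      (Sing L).ncard = 15 ∧ (Sing P).ncard = 15 ∧
      (∀ p : P2, IsSing L p → mult L p = 2) ∧
      (∀ p : P2, IsSing P p → mult P p = 2) ∧
      extSS L ≠ extSS P := by
  refine ⟨arr specialT, arr genericT, ?_, ?_, ?_, ?_, fun p => mult_arr_eq, fun p => mult_arr_eq,
    ?_⟩
  · rw [card_arr, card_specialT]
  · rw [card_arr, card_genericT]
  · rw [ncard_sing_arr, card_specialT]; rfl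
  · rw [ncard_sing_arr, card_genericT]; rfl
  · have h1 := extSS_specialT_le
    have h2 := five_le_extSS_genericT
    omega
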